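/- If 0<d<d̃≤1, then φ̄_d(x₂)>φ̄_{d̃}(x₂) for every x₂∈(0,d). -/

import Mathlib

open Real Set MeasureTheory

noncomputable section

/-- `φ` solves the boundary value problem `φ'' = f(φ)` on `(0,d)`, `φ(0) = 0`,
`φ(d) = Q`, `0 < φ < Q` on `(0,d)`, with `φ ∈ C²((0,d)) ∩ C¹([0,d])`. -/
def IsBVPSol (Q : ℝ) (f : ℝ → ℝ) (d : ℝ) (φ : ℝ → ℝ) : Prop :=
  ContDiffOn ℝ 1 φ (Set.Icc 0 d) ∧ ContDiffOn ℝ 2 φ (Set.Ioo 0 d) ∧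
  (∀ x ∈ Set.Ioo (0 : ℝ) d, deriv (deriv φ) x = f (φ x)) ∧
  φ 0 = 0 ∧ φ d = Q ∧ (∀ x ∈ Set.Ioo (0 : ℝ) d, 0 < φ x ∧ φ x < Q)

open Filter Topology

/-- A left inverse of a continuous function on a compact set is continuous on the image. -/
theorem Set.LeftInvOn.continuousOn_image_of_isCompact {g k : ℝ → ℝ} {K : Set ℝ}
    (hk : LeftInvOn k g K) (hK : IsCompact K) (hg : ContinuousOn g K) :
    ContinuousOn k (g '' K) := by
  rw [continuousOn_iff_isClosed]
  intro C hC
  refine ⟨g '' (K ∩ C), ((hK.inter_right hC).image_of_continuousOn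
    (hg.mono inter_subset_left)).isClosed, ?_⟩
  ext s
  constructor
  · rintro ⟨hsC, t, ht, rfl⟩
    rw [mem_preimage, hk ht] at hsC
    exact ⟨⟨t, ⟨ht, hsC⟩, rfl⟩, t, ht, rfl⟩
  · rintro ⟨⟨t, ⟨ht, htC⟩, rfl⟩, hs⟩
    refine ⟨?_, hs⟩
    rwa [mem_preimage, hk ht]

theorem Set.LeftInvOn.continuousOn_Icc {g k : ℝ → ℝ} {a b : ℝ}
    (hk : LeftInvOn k g (Icc a b)) (hab : a ≤ b) (hg : ContinuousOn g (Icc a b)) :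
    ContinuousOn k (Icc (g a) (g b)) :=
  (hk.continuousOn_image_of_isCompact isCompact_Icc hg).mono (intermediate_value_Icc hab hg)

/-- A left inverse maps values strictly between `g a` and `g b` into `(a, b)`,
and is a right inverse there. -/
theorem Set.LeftInvOn.mem_Ioo_and_apply_eq {g k : ℝ → ℝ} {a b s : ℝ}
    (hk : LeftInvOn k g (Icc a b)) (hab : a ≤ b) (hg : ContinuousOn g (Icc a b))
    (hs : s ∈ Ioo (g a) (g b)) : k s ∈ Ioo a b ∧ g (k s) = s := by
  obtain ⟨t, ht, rfl⟩ := intermediate_value_Ioo hab hg hs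
  rw [hk (Ioo_subset_Icc_self ht)]
  exact ⟨ht, rfl⟩

theorem Set.LeftInvOn.hasDerivAt {g k : ℝ → ℝ} {a b s g' : ℝ}
    (hk : LeftInvOn k g (Icc a b)) (hab : a ≤ b) (hg : ContinuousOn g (Icc a b))
    (hs : s ∈ Ioo (g a) (g b)) (hg' : HasDerivAt g g' (k s)) (h0 : g' ≠ 0) :
    HasDerivAt k g'⁻¹ s := by
  refine HasDerivAt.of_local_left_inverse
    ((hk.continuousOn_Icc hab hg).continuousAt (Icc_mem_nhds hs.1 hs.2)) hg' h0 ?_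
  filter_upwards [Ioo_mem_nhds hs.1 hs.2] with y hy
  exact (hk.mem_Ioo_and_apply_eq hab hg hy).2

section Energy

variable {Q d : ℝ} {κ f φ : ℝ → ℝ}

theorem continuousOn_inverse_cubic
    (hκ : ∀ t ∈ Icc (0 : ℝ) 1, κ (Q * (3 * t ^ 2 - 2 * t ^ 3)) = t) :
    ContinuousOn κ (Icc 0 Q) := by
  have h := Set.LeftInvOn.continuousOn_Icc (g := fun t => Q * (3 * t ^ 2 - 2 * t ^ 3)) (k := κ)
    (a := 0) (b := 1) hκ zero_le_one (by fun_prop)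
  norm_num at h
  exact h

theorem inverse_cubic_mem_Ioo
    (hκ : ∀ t ∈ Icc (0 : ℝ) 1, κ (Q * (3 * t ^ 2 - 2 * t ^ 3)) = t)
    {s : ℝ} (hs : s ∈ Ioo 0 Q) : κ s ∈ Ioo (0 : ℝ) 1 :=
  (Set.LeftInvOn.mem_Ioo_and_apply_eq (g := fun t => Q * (3 * t ^ 2 - 2 * t ^ 3)) (k := κ)
    (a := 0) (b := 1) hκ zero_le_one (by fun_prop) (by norm_num; exact hs)).1

/-- `(6Qκ(1-κ))²` is twice a primitive of `f`. -/
theorem hasDerivAt_potential (hQ : 0 < Q)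
    (hκ : ∀ t ∈ Icc (0 : ℝ) 1, κ (Q * (3 * t ^ 2 - 2 * t ^ 3)) = t)
    (hf : ∀ s : ℝ, f s = 6 * Q * (1 - 2 * κ s)) {s : ℝ} (hs : s ∈ Ioo 0 Q) :
    HasDerivAt (fun s => (6 * Q * (κ s * (1 - κ s))) ^ 2) (2 * f s) s := by
  obtain ⟨h0, h1⟩ := inverse_cubic_mem_Ioo hκ hs
  have h1' : 0 < 1 - κ s := sub_pos.2 h1
  have hP : HasDerivAt (fun t : ℝ => Q * (3 * t ^ 2 - 2 * t ^ 3))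
      (6 * Q * (κ s * (1 - κ s))) (κ s) := by
    have h := (((hasDerivAt_pow 2 (κ s)).const_mul 3).sub
      ((hasDerivAt_pow 3 (κ s)).const_mul 2)).const_mul Q
    refine h.congr_deriv ?_
    norm_num
    ring
  have hpos : 0 < 6 * Q * (κ s * (1 - κ s)) := by positivity
  have hk : HasDerivAt κ (6 * Q * (κ s * (1 - κ s)))⁻¹ s :=
    Set.LeftInvOn.hasDerivAt (g := fun t => Q * (3 * t ^ 2 - 2 * t ^ 3)) (a := 0) (b := 1)
      hκ zero_le_one (by fun_prop) (by norm_num; exact hs) hP hpos.ne'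
  refine (((hk.mul (hk.const_sub 1)).const_mul (6 * Q)).pow 2).congr_deriv ?_
  rw [hf]
  simp only [Pi.mul_apply]
  field_simp
  norm_num
  ring

theorem IsBVPSol.continuousOn (h : IsBVPSol Q f d φ) : ContinuousOn φ (Icc 0 d) :=
  h.1.continuousOn

theorem IsBVPSol.hasDerivAt (h : IsBVPSol Q f d φ) {x : ℝ} (hx : x ∈ Ioo 0 d) :
    HasDerivAt φ (deriv φ x) x :=
  ((h.2.1.differentiableOn (by norm_num)).differentiableAt
    (isOpen_Ioo.mem_nhds hx)).hasDerivAt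

theorem IsBVPSol.hasDerivAt_deriv (h : IsBVPSol Q f d φ) {x : ℝ} (hx : x ∈ Ioo 0 d) :
    HasDerivAt (deriv φ) (f (φ x)) x := by
  have h1 : ContDiffOn ℝ 1 (deriv φ) (Ioo 0 d) :=
    h.2.1.deriv_of_isOpen isOpen_Ioo (by norm_num)
  rw [← h.2.2.1 x hx]
  exact ((h1.differentiableOn (by norm_num)).differentiableAt
    (isOpen_Ioo.mem_nhds hx)).hasDerivAt

/-- Conservation of energy, with a nonnegative constant. -/
theorem IsBVPSol.exists_energy (hQ : 0 < Q)
    (hκ : ∀ t ∈ Icc (0 : ℝ) 1, κ (Q * (3 * t ^ 2 - 2 * t ^ 3)) = t)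
    (hf : ∀ s : ℝ, f s = 6 * Q * (1 - 2 * κ s)) (hd : 0 < d) (h : IsBVPSol Q f d φ) :
    ∃ c, 0 ≤ c ∧ ∀ x ∈ Ioo 0 d,
      deriv φ x ^ 2 = c + (6 * Q * (κ (φ x) * (1 - κ (φ x)))) ^ 2 := by
  have hder : ∀ x ∈ Ioo 0 d, HasDerivAt
      (fun x => deriv φ x ^ 2 - (6 * Q * (κ (φ x) * (1 - κ (φ x)))) ^ 2) 0 x := by
    intro x hx
    have h1 := (h.hasDerivAt_deriv hx).pow 2
    have h2 := (hasDerivAt_potential hQ hκ hf (h.2.2.2.2.2 x hx)).comp x (h.hasDerivAt hx)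
    refine (h1.sub h2).congr_deriv ?_
    norm_num
    ring
  obtain ⟨c, hc⟩ := isOpen_Ioo.exists_is_const_of_deriv_eq_zero isPreconnected_Ioo
    (fun x hx => (hder x hx).differentiableAt.differentiableWithinAt)
    (fun x hx => (hder x hx).deriv)
  refine ⟨c, ?_, fun x hx => by linarith [hc x hx]⟩
  have hmaps : MapsTo φ (Icc 0 d) (Icc 0 Q) := by
    intro x hx
    rcases hx.1.eq_or_lt with h0 | h0
    · rw [← h0, h.2.2.2.1]; exact ⟨le_rfl, hQ.le⟩
    rcases hx.2.eq_or_lt with h1 | h1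
    · rw [h1, h.2.2.2.2.1]; exact ⟨hQ.le, le_rfl⟩
    exact ⟨(h.2.2.2.2.2 x ⟨h0, h1⟩).1.le, (h.2.2.2.2.2 x ⟨h0, h1⟩).2.le⟩
  have hκφ : ContinuousOn (fun x => κ (φ x)) (Icc 0 d) :=
    (continuousOn_inverse_cubic hκ).comp h.continuousOn hmaps
  have hcont : ContinuousOn (fun x => -(6 * Q * (κ (φ x) * (1 - κ (φ x)))) ^ 2) (Icc 0 d) :=
    ((continuousOn_const.mul (hκφ.mul (continuousOn_const.sub hκφ))).pow 2).neg
  have hκ0 : κ 0 = 0 := by simpa using hκ 0 (by simp)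
  have hlim : Tendsto (fun x => -(6 * Q * (κ (φ x) * (1 - κ (φ x)))) ^ 2) (𝓝[>] 0) (𝓝 0) := by
    have h0 := (hcont 0 ⟨le_rfl, hd.le⟩).tendsto
    simp only [h.2.2.2.1, hκ0] at h0
    rw [← nhdsWithin_Ioo_eq_nhdsGT hd]
    simpa using h0.mono_left (nhdsWithin_mono _ Ioo_subset_Icc_self)
  refine le_of_tendsto hlim ?_
  filter_upwards [Ioo_mem_nhdsGT hd] with x hx
  linarith [hc x hx, sq_nonneg (deriv φ x)]

theorem IsBVPSol.deriv_pos (hQ : 0 < Q)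
    (hκ : ∀ t ∈ Icc (0 : ℝ) 1, κ (Q * (3 * t ^ 2 - 2 * t ^ 3)) = t)
    (hf : ∀ s : ℝ, f s = 6 * Q * (1 - 2 * κ s)) (hd : 0 < d) (h : IsBVPSol Q f d φ) :
    ∀ x ∈ Ioo 0 d, 0 < deriv φ x := by
  obtain ⟨c, hc0, hc⟩ := h.exists_energy hQ hκ hf hd
  have hne : ∀ x ∈ Ioo 0 d, deriv φ x ≠ 0 := by
    intro x hx h0
    obtain ⟨h1, h2⟩ := inverse_cubic_mem_Ioo hκ (h.2.2.2.2.2 x hx)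
    have h2' : 0 < 1 - κ (φ x) := sub_pos.2 h2
    have h3 : 0 < (6 * Q * (κ (φ x) * (1 - κ (φ x)))) ^ 2 := by positivity
    have h4 := hc x hx
    rw [h0] at h4
    linarith
  refine (hasDerivWithinAt_forall_lt_or_forall_gt_of_forall_ne (convex_Ioo 0 d)
    (fun x hx => (h.hasDerivAt hx).hasDerivWithinAt) hne).resolve_left fun hneg => ?_
  have hanti := strictAntiOn_of_deriv_neg (convex_Icc 0 d) h.continuousOn
    (by rw [interior_Icc]; exact hneg)
  have := hanti (left_mem_Icc.2 hd.le) (right_mem_Icc.2 hd.le) hd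
  rw [h.2.2.2.1, h.2.2.2.2.1] at this
  linarith

theorem IsBVPSol.strictMonoOn (hQ : 0 < Q)
    (hκ : ∀ t ∈ Icc (0 : ℝ) 1, κ (Q * (3 * t ^ 2 - 2 * t ^ 3)) = t)
    (hf : ∀ s : ℝ, f s = 6 * Q * (1 - 2 * κ s)) (hd : 0 < d) (h : IsBVPSol Q f d φ) :
    StrictMonoOn φ (Icc 0 d) :=
  strictMonoOn_of_deriv_pos (convex_Icc 0 d) h.continuousOn
    (by rw [interior_Icc]; exact h.deriv_pos hQ hκ hf hd)

end Energy

/-- Comparison of one-dimensional solutions on intervals of different lengths: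
if `0 < d < d̃ ≤ 1` then `φ̄_d > φ̄_{d̃}` on `(0,d)`. -/
theorem stmt13
    (Q : ℝ) (hQ : 0 < Q)
    (κ : ℝ → ℝ) (hκ : ∀ t ∈ Set.Icc (0 : ℝ) 1, κ (Q * (3 * t ^ 2 - 2 * t ^ 3)) = t)
    (f : ℝ → ℝ) (hf : ∀ s : ℝ, f s = 6 * Q * (1 - 2 * κ s))
    (d dt : ℝ) (hd : 0 < d) (hddt : d < dt) (hdt : dt ≤ 1)
    (φd φdt : ℝ → ℝ) (hφd : IsBVPSol Q f d φd) (hφdt : IsBVPSol Q f dt φdt) :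
    ∀ x ∈ Set.Ioo (0 : ℝ) d, φdt x < φd x := by
  have hdt0 : 0 < dt := hd.trans hddt
  obtain ⟨a, -, ha⟩ := hφd.exists_energy hQ hκ hf hd
  obtain ⟨b, -, hb⟩ := hφdt.exists_energy hQ hκ hf hdt0
  have hpos := hφd.deriv_pos hQ hκ hf hd
  have hpost := hφdt.deriv_pos hQ hκ hf hdt0
  have hmono := hφd.strictMonoOn hQ hκ hf hd
  have hmonot := hφdt.strictMonoOn hQ hκ hf hdt0
  have hend : φd 0 = φdt 0 ∧ φd d = φdt dt := by
    rw [hφd.2.2.2.1, hφdt.2.2.2.1, hφd.2.2.2.2.1, hφdt.2.2.2.2.1]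
    exact ⟨rfl, rfl⟩
  set ψ := Function.invFunOn φdt (Icc 0 dt)
  have hψ : LeftInvOn ψ φdt (Icc 0 dt) := hmonot.injOn.leftInvOn_invFunOn
  -- The time `τ x` at which `φdt` attains the value `φd x`.
  set τ : ℝ → ℝ := fun x => ψ (φd x) with hτ
  have hval : ∀ x ∈ Ioo 0 d, φd x ∈ Ioo (φdt 0) (φdt dt) := by
    intro x hx
    rw [hφdt.2.2.2.1, hφdt.2.2.2.2.1]
    exact hφd.2.2.2.2.2 x hx
  have hτmem : ∀ x ∈ Ioo 0 d, τ x ∈ Ioo 0 dt ∧ φdt (τ x) = φd x := fun x hx =>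
    hψ.mem_Ioo_and_apply_eq hdt0.le hφdt.continuousOn (hval x hx)
  have hτ0 : τ 0 = 0 := by
    rw [hτ]
    simp only [hend.1]
    exact hψ (left_mem_Icc.2 hdt0.le)
  have hτcont : ContinuousOn τ (Icc 0 d) := by
    refine (hψ.continuousOn_Icc hdt0.le hφdt.continuousOn).comp hφd.continuousOn fun x hx => ?_
    rw [← hend.1, ← hend.2]
    exact ⟨hmono.monotoneOn (left_mem_Icc.2 hd.le) hx hx.1,
      hmono.monotoneOn hx (right_mem_Icc.2 hd.le) hx.2⟩
  have hτder : ∀ x ∈ Ioo 0 d, HasDerivAt τ (deriv φd x / deriv φdt (τ x)) x := by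
    intro x hx
    have h := (hψ.hasDerivAt hdt0.le hφdt.continuousOn (hval x hx)
      (hφdt.hasDerivAt (hτmem x hx).1) (hpost _ (hτmem x hx).1).ne').comp x (hφd.hasDerivAt hx)
    refine h.congr_deriv ?_
    rw [mul_comm, ← div_eq_mul_inv]
  have hsubder : ∀ x ∈ Ioo 0 d,
      HasDerivAt (fun x => τ x - x) (deriv φd x / deriv φdt (τ x) - 1) x :=
    fun x hx => (hτder x hx).sub (hasDerivAt_id x)
  have hsubcont : ContinuousOn (fun x => τ x - x) (Icc 0 d) := hτcont.sub continuousOn_id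
  have hsq : ∀ x ∈ Ioo 0 d, deriv φd x ^ 2 - a = deriv φdt (τ x) ^ 2 - b := by
    intro x hx
    rw [ha x hx, hb _ (hτmem x hx).1, (hτmem x hx).2]
    ring
  have hba : b < a := by
    by_contra! hab
    have hanti : AntitoneOn (fun x => τ x - x) (Icc 0 d) := by
      refine antitoneOn_of_deriv_nonpos (convex_Icc 0 d) hsubcont ?_ ?_ <;> rw [interior_Icc]
      · exact fun x hx => (hsubder x hx).differentiableAt.differentiableWithinAt
      · intro x hx
        rw [(hsubder x hx).deriv, sub_nonpos, div_le_one (hpost _ (hτmem x hx).1)]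
        exact (sq_le_sq₀ (hpos x hx).le (hpost _ (hτmem x hx).1).le).1 (by linarith [hsq x hx])
    have h := hanti (left_mem_Icc.2 hd.le) (right_mem_Icc.2 hd.le) hd.le
    have hτd : τ d = dt := by
      rw [hτ]
      simp only [hend.2]
      exact hψ (right_mem_Icc.2 hdt0.le)
    simp only [hτ0, hτd] at h
    linarith
  have hsmono : StrictMonoOn (fun x => τ x - x) (Icc 0 d) := by
    refine strictMonoOn_of_deriv_pos (convex_Icc 0 d) hsubcont ?_
    rw [interior_Icc]
    intro x hx
    rw [(hsubder x hx).deriv, sub_pos, one_lt_div (hpost _ (hτmem x hx).1)]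
    exact (sq_lt_sq₀ (hpost _ (hτmem x hx).1).le (hpos x hx).le).1 (by linarith [hsq x hx])
  intro x hx
  have h := hsmono (left_mem_Icc.2 hd.le) (Ioo_subset_Icc_self hx) hx.1
  simp only [hτ0, sub_zero] at h
  rw [← (hτmem x hx).2]
  exact hmonot ⟨hx.1.le, (hx.2.trans hddt).le⟩ (Ioo_subset_Icc_self (hτmem x hx).1)
    (by linarith)
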